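/- For every integer k ≥ 3225, there exists a k-nice set Q ⊆ ℤ² of height at most three such that every k-nice set has cardinality at most the cardinality of Q (i.e., Q is a k-nice set of maximum size). -/

import Mathlib

/-- A set `Q ⊆ ℤ²` is `k`-nice if every element is a nonzero coprime pair,
`Q` does not contain both a pair and its negation, and all cross determinants
are bounded by `k` in absolute value. -/
def IsKNice (k : ℕ) (Q : Set (ℤ × ℤ)) : Prop :=
  (∀ p ∈ Q, p ≠ (0, 0) ∧ Int.gcd p.1 p.2 = 1) ∧
  (∀ p ∈ Q, -p ∉ Q) ∧
  (∀ p ∈ Q, ∀ q ∈ Q, |p.1 * q.2 - q.1 * p.2| ≤ (k : ℤ))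

/-- `Q` is y-non-negative: all second coordinates are non-negative. -/
def YNonneg (Q : Set (ℤ × ℤ)) : Prop := ∀ p ∈ Q, 0 ≤ p.2

/-- The height of `Q` is at most `h`. -/
def HeightLe (Q : Set (ℤ × ℤ)) (h : ℕ) : Prop := ∀ p ∈ Q, |p.2| ≤ (h : ℤ)

/-- The height of `Q` is exactly `h`: the maximum of `|n|` over `(m, n) ∈ Q` is `h`. -/
def HeightEq (Q : Set (ℤ × ℤ)) (h : ℕ) : Prop :=
  HeightLe Q h ∧ ∃ p ∈ Q, |p.2| = (h : ℤ)

/-!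
If `Q` has at least `k + 3` points, pigeonholing `Q ∪ -Q` modulo `2M` with `M ≈ √(2k/3)` gives a
direction in which `Q` is thin, and turning that direction horizontal makes the height `h` at most
about `√(3k/2)`. The widths `L a`, `L b` of two rows satisfy `b * L a + a * L b ≤ 2k`, while
coprimality to `n` leaves only about `φ(n) / n * L n` points in row `n`. If `h ≥ 4`, linear
programming over these constraints bounds the total by `k + 2`, a contradiction; sets of height one
with `k + 2` points always exist. The linear program is solved explicitly for `h ≤ 200`. For taller
sets, `φ(n) / n` is relaxed to `φ(d) / d` with `d = gcd(n, 210)`, which is periodic in `n`, and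
`∑ L n ≤ (π / 2) * k` is obtained by integrating the constraint over a quarter circle.
-/

open Finset Real MeasureTheory

/-! ### Integers coprime to `d` in an interval -/

/-- Kadane's running maximum: the largest value over `y ≤ x` of
`d * #{z ∈ [y, x) | z coprime to d} - φ(d) * (x - y)`. Truncated subtraction restarts the window
whenever this excess would become negative. -/
def excess (d : ℕ) : ℕ → ℕ
  | 0 => 0
  | x + 1 => excess d x + (if d.Coprime x then d else 0) - d.totient

/-- The largest `excess d y` over `y ≤ x`. -/
def maxExcess (d : ℕ) : ℕ → ℕ
  | 0 => 0
  | x + 1 => max (maxExcess d x) (excess d (x + 1))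

/-- The constant in `mul_card_le_of_coprime`. By periodicity windows ending at or before `2 * d`
suffice; the extra `φ(d)` is there because a set of diameter `ℓ` lies in a window of length
`ℓ + 1`. -/
def discrepancy (d : ℕ) : ℕ := maxExcess d (2 * d) + d.totient

lemma excess_le_maxExcess (d : ℕ) {x y : ℕ} (hxy : x ≤ y) : excess d x ≤ maxExcess d y := by
  induction y, hxy using Nat.le_induction with
  | base => cases x <;> simp [excess, maxExcess]
  | succ y _ ih => exact ih.trans (le_max_left _ _)

lemma mul_card_filter_coprime_Ico_le_excess (d : ℕ) {a b : ℕ} (hab : a ≤ b) :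
    d * #{x ∈ Ico a b | d.Coprime x} ≤ d.totient * (b - a) + excess d b := by
  induction b, hab using Nat.le_induction with
  | base => simp
  | succ b hab ih =>
    rw [Nat.Ico_succ_right_eq_insert_Ico hab, filter_insert, Nat.succ_sub hab]
    simp only [excess]
    split_ifs with hb
    · rw [card_insert_of_notMem (by simp)]
      grind
    · grind

lemma mul_card_filter_coprime_Ico_le {d a : ℕ} (ha : a < d) (ℓ : ℕ) :
    d * #{x ∈ Ico a (a + ℓ + 1) | d.Coprime x} ≤ d.totient * ℓ + discrepancy d := by
  induction ℓ using Nat.strong_induction_on with | _ ℓ ih => ?_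
  obtain hℓ | hℓ := lt_or_ge ℓ d
  · have := mul_card_filter_coprime_Ico_le_excess d (show a ≤ a + ℓ + 1 by omega)
    have := excess_le_maxExcess d (show a + ℓ + 1 ≤ 2 * d by omega)
    rw [show a + ℓ + 1 - a = ℓ + 1 by omega] at *
    grind only [discrepancy]
  obtain ⟨ℓ, rfl⟩ := exists_add_of_le hℓ
  have hsplit : #{x ∈ Ico a (a + (d + ℓ) + 1) | d.Coprime x} =
      #{x ∈ Ico a (a + ℓ + 1) | d.Coprime x} + d.totient := by
    have hdisj := Ico_disjoint_Ico_consecutive a (a + ℓ + 1) (a + ℓ + 1 + d)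
    rw [← Nat.filter_coprime_Ico_eq_totient d (a + ℓ + 1),
      ← card_union_of_disjoint (disjoint_filter_filter hdisj), ← filter_union,
      Ico_union_Ico_eq_Ico (by omega) (by omega)]
    grind
  calc
    _ = d * #{x ∈ Ico a (a + ℓ + 1) | d.Coprime x} + d.totient * d := by rw [hsplit]; ring
    _ ≤ d.totient * ℓ + discrepancy d + d.totient * d := by gcongr; exact ih ℓ (by omega)
    _ = d.totient * (d + ℓ) + discrepancy d := by ring

lemma mul_card_le_of_coprime {d ℓ : ℕ} (hd : 0 < d) {A : Finset ℤ}
    (hA : ∀ x ∈ A, Int.gcd x d = 1) (hℓ : ∀ x ∈ A, ∀ y ∈ A, x - y ≤ ℓ) :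
    d * #A ≤ d.totient * ℓ + discrepancy d := by
  obtain rfl | hne := A.eq_empty_or_nonempty
  · simp
  obtain ⟨m, hm, hmin⟩ := A.exists_min_image id hne
  have ha : m % d < d := Int.emod_lt_of_pos m (mod_cast hd)
  have ha₀ : 0 ≤ m % d := Int.emod_nonneg m (by omega)
  refine le_trans (Nat.mul_le_mul_left d ?_)
    (mul_card_filter_coprime_Ico_le (a := (m % d).toNat) (by omega) ℓ)
  refine card_le_card_of_injOn (fun x => (x - m + m % d).toNat) (fun x hx => ?_) ?_
  · have hmx := hmin x hx
    have hxm := hℓ x hx m hm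
    have hcop : Int.gcd (d : ℤ) (x - m + m % d) = 1 := by
      rw [show x - m + m % d = x - d * (m / d) by rw [Int.emod_def]; ring,
        Int.gcd_sub_mul_left_right, Int.gcd_comm, hA x hx]
    simp only [id] at hmx
    simp only [coe_filter, mem_Ico, Set.mem_ofPred_eq]
    refine ⟨by omega, ?_⟩
    rwa [Nat.Coprime, ← Int.gcd_natCast_natCast, Int.toNat_of_nonneg (by omega)]
  · intro x hx y hy hxy
    have := hmin x hx
    have := hmin y hy
    simp only [id] at *
    omega

/-! ### Width profiles of height at most 200 -/

/-- The constraint on `L` obeyed by the row widths of a nice set of height `h`: here `L n` stands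
for the width of row `n`. -/
def IsWidthProfile (k h : ℕ) (L : ℕ → ℕ) : Prop :=
  ∀ a ∈ Icc 1 h, ∀ b ∈ Icc 1 h, b * L a + a * L b ≤ 2 * k

/-- The cost of a greedy dual solution for maximizing `∑ n ∈ Icc a (a + d), w n * L n` over width
profiles `L`: it repeatedly picks a multiplicity `y` for the constraint pairing the two end rows
that pays off one of them, and then removes that row. The arguments `s` and `t` are the parts of
the weights `w a` and `w (a + d)` that have already been paid for. -/
def dualCost (w : ℕ → ℕ) : ℕ → ℕ → ℕ → ℕ → ℕ
  | 0, a, s, t => (w a - (s + t)) ⌈/⌉ (2 * a)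
  | d + 1, a, s, t =>
    if (w a - s) * a ≤ (w (a + d + 1) - t) * (a + d + 1) then
      (w a - s) ⌈/⌉ (a + d + 1) +
        dualCost w d (a + 1) 0 (t + (w a - s) ⌈/⌉ (a + d + 1) * a)
    else
      (w (a + d + 1) - t) ⌈/⌉ a +
        dualCost w d a (s + (w (a + d + 1) - t) ⌈/⌉ a * (a + d + 1)) 0

lemma le_add_ceilDiv_mul {b : ℕ} (hb : 0 < b) (x s : ℕ) : x ≤ s + (x - s) ⌈/⌉ b * b := by
  have := le_smul_ceilDiv (b := x - s) hb
  rw [smul_eq_mul] at this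
  grind

lemma IsWidthProfile.sum_weight_mul_le {k h : ℕ} {L : ℕ → ℕ} (hL : IsWidthProfile k h L)
    (w : ℕ → ℕ) (d : ℕ) {a : ℕ} (ha : 1 ≤ a) (had : a + d ≤ h) (s t : ℕ) :
    ∑ n ∈ Icc a (a + d), w n * L n ≤ 2 * k * dualCost w d a s t + s * L a + t * L (a + d) := by
  induction d generalizing a s t with
  | zero =>
    have hLa := hL a (by grind) a (by grind)
    have hy := le_add_ceilDiv_mul (b := 2 * a) (by omega) (w a) (s + t)
    simp only [add_zero, Icc_self, sum_singleton, dualCost]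
    generalize (w a - (s + t)) ⌈/⌉ (2 * a) = y at *
    grw [hy]
    linear_combination y * hLa
  | succ d ih =>
    have hLab := hL a (by grind) (a + d + 1) (by grind)
    simp only [dualCost, ← add_assoc]
    split_ifs
    · have hy := le_add_ceilDiv_mul (b := a + d + 1) (by omega) (w a) s
      generalize (w a - s) ⌈/⌉ (a + d + 1) = y at *
      have hrec := ih (a := a + 1) (by omega) (by omega) 0 (t + y * a)
      rw [show a + 1 + d = a + d + 1 by omega] at hrec
      rw [← add_sum_Ioc_eq_sum_Icc (by omega), ← Icc_add_one_left_eq_Ioc]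
      grw [hy, hrec]
      linear_combination y * hLab
    · have hy := le_add_ceilDiv_mul (b := a) ha (w (a + d + 1)) t
      generalize (w (a + d + 1) - t) ⌈/⌉ a = y at *
      have hrec := ih ha (by omega) (s + y * (a + d + 1)) 0
      rw [sum_Icc_succ_top (by omega)]
      grw [hy, hrec]
      linear_combination y * hLab

/-- The common denominator to which the coefficients below are rounded up. -/
def scale : ℕ := 10 ^ 7

/-- The coefficient `φ(n) / n` of the width of row `n`, in units of `1 / scale`. -/
def rowWeight : ℕ → ℕ
  | 0 => 0
  | n + 1 => (scale * (n + 1).totient) ⌈/⌉ (n + 1)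

/-- The constant term `discrepancy n / n` of row `n`, in units of `1 / scale`. -/
def rowError : ℕ → ℕ
  | 0 => 0
  | n + 1 => (scale * discrepancy (n + 1)) ⌈/⌉ (n + 1)

/-- The least `k ≥ 3225` with `2 * h ^ 2 ≤ 3 * k + 6 * h`. -/
def minParameter (h : ℕ) : ℕ := max 3225 ((2 * h ^ 2 - 6 * h) ⌈/⌉ 3)

lemma dualCost_certificate : ∀ h ∈ Icc 4 200,
    2 * dualCost rowWeight (h - 1) 1 0 0 ≤ scale ∧
    2 * minParameter h * dualCost rowWeight (h - 1) 1 0 0 + ∑ n ∈ Icc 1 h, rowError n <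
      scale * (minParameter h + 2) := by
  decide +kernel

lemma scale_mul_le {n c ℓ : ℕ} (hn : 1 ≤ n) (hc : n * c ≤ n.totient * ℓ + discrepancy n) :
    scale * c ≤ rowWeight n * ℓ + rowError n := by
  obtain ⟨n, rfl⟩ := Nat.exists_eq_add_of_le' hn
  have hw : scale * (n + 1).totient ≤ (n + 1) * rowWeight (n + 1) :=
    le_smul_ceilDiv n.succ_pos
  have he : scale * discrepancy (n + 1) ≤ (n + 1) * rowError (n + 1) :=
    le_smul_ceilDiv n.succ_pos
  refine Nat.le_of_mul_le_mul_left ?_ n.succ_pos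
  calc (n + 1) * (scale * c) = scale * ((n + 1) * c) := by ring
    _ ≤ scale * ((n + 1).totient * ℓ + discrepancy (n + 1)) := by gcongr
    _ = scale * (n + 1).totient * ℓ + scale * discrepancy (n + 1) := by ring
    _ ≤ (n + 1) * rowWeight (n + 1) * ℓ + (n + 1) * rowError (n + 1) := by gcongr
    _ = (n + 1) * (rowWeight (n + 1) * ℓ + rowError (n + 1)) := by ring

lemma IsWidthProfile.sum_le_of_height_le {k h : ℕ} {L : ℕ → ℕ} (hL : IsWidthProfile k h L)
    (hk : 3225 ≤ k) (hh : h ∈ Icc 4 200) (hkh : 2 * h ^ 2 ≤ 3 * k + 6 * h) {c : ℕ → ℕ}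
    (hc : ∀ n ∈ Icc 1 h, n * c n ≤ n.totient * L n + discrepancy n) :
    ∑ n ∈ Icc 1 h, c n ≤ k + 1 := by
  obtain ⟨hslope, hvalue⟩ := dualCost_certificate h hh
  have hh4 : 4 ≤ h := (mem_Icc.1 hh).1
  have hdual := hL.sum_weight_mul_le rowWeight (h - 1) le_rfl (by omega) 0 0
  rw [show 1 + (h - 1) = h by omega] at hdual
  have hmin : minParameter h ≤ k := by
    refine max_le hk ((ceilDiv_le_iff_le_smul (by norm_num)).2 ?_)
    rw [smul_eq_mul]
    omega
  obtain ⟨e, rfl⟩ := exists_add_of_le hmin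
  generalize dualCost rowWeight (h - 1) 1 0 0 = D at *
  have hlt : scale * ∑ n ∈ Icc 1 h, c n < scale * (minParameter h + e + 2) := calc
    _ ≤ ∑ n ∈ Icc 1 h, (rowWeight n * L n + rowError n) := by
      rw [mul_sum]
      exact sum_le_sum fun n hn => scale_mul_le (mem_Icc.1 hn).1 (hc n hn)
    _ ≤ 2 * (minParameter h + e) * D + ∑ n ∈ Icc 1 h, rowError n := by
      rw [sum_add_distrib]
      gcongr
      simpa using hdual
    _ = (2 * minParameter h * D + ∑ n ∈ Icc 1 h, rowError n) + e * (2 * D) := by ring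
    _ < scale * (minParameter h + 2) + e * scale :=
      add_lt_add_of_lt_of_le hvalue (by gcongr)
    _ = _ := by ring
  have := Nat.lt_of_mul_lt_mul_left hlt
  omega

/-! ### Width profiles of height above 200 -/

lemma integral_comp_mul_sin {ρ : ℝ → ℝ} {r : ℝ} (hr : 0 ≤ r)
    (hρ : IntervalIntegrable ρ volume 0 r) :
    IntervalIntegrable (fun θ => ρ (r * sin θ) * (r * cos θ)) volume 0 (π / 2) ∧
      ∫ θ in 0..π / 2, ρ (r * sin θ) * (r * cos θ) = ∫ t in 0..r, ρ t := by
  have hπ : 0 ≤ π / 2 := by positivity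
  have hcont : ContinuousOn (fun θ => r * sin θ) (Set.uIcc 0 (π / 2)) := by fun_prop
  have hderiv : ∀ θ ∈ Set.Ioo (min 0 (π / 2)) (max 0 (π / 2)),
      HasDerivAt (fun θ => r * sin θ) (r * cos θ) θ :=
    fun θ _ => (hasDerivAt_sin θ).const_mul r
  have hnonneg : ∀ θ ∈ Set.Ioo (min 0 (π / 2)) (max 0 (π / 2)), 0 ≤ r * cos θ := by
    intro θ hθ
    rw [min_eq_left hπ, max_eq_right hπ] at hθ
    exact mul_nonneg hr (cos_nonneg_of_mem_Icc ⟨by linarith [hθ.1], hθ.2.le⟩)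
  refine ⟨(intervalIntegral.integrable_comp_mul_deriv_iff_of_deriv_nonneg hcont hderiv hnonneg).2
    (by simpa using hρ), ?_⟩
  simpa using intervalIntegral.integral_comp_mul_deriv_of_deriv_nonneg (g := ρ) hcont hderiv hnonneg

/-- In the parametrization by the angle `θ`, the reflection `θ ↦ π / 2 - θ` exchanges `s` and `t`,
so averaging the integral with its reflection makes the constraint appear. -/
lemma integral_le_of_forall_mem_circle {ρ : ℝ → ℝ} {r C : ℝ} (hr : 0 < r)
    (hρ : IntervalIntegrable ρ volume 0 r)
    (hC : ∀ s ∈ Set.Ioo 0 r, ∀ t ∈ Set.Ioo 0 r, s ^ 2 + t ^ 2 = r ^ 2 → s * ρ t + t * ρ s ≤ C) :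
    ∫ t in 0..r, ρ t ≤ π / 4 * C := by
  set F : ℝ → ℝ := fun θ => ρ (r * sin θ) * (r * cos θ) with hF
  obtain ⟨hFint, hsubst⟩ := integral_comp_mul_sin hr.le hρ
  have hFint' : IntervalIntegrable (fun θ => F (π / 2 - θ)) volume 0 (π / 2) := by
    simpa using (hFint.comp_sub_left (π / 2)).symm
  have hreflect : ∫ θ in 0..π / 2, F (π / 2 - θ) = ∫ θ in 0..π / 2, F θ := by
    simp
  have hbound : ∀ θ ∈ Set.Ioo 0 (π / 2), F θ + F (π / 2 - θ) ≤ C := by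
    rintro θ ⟨hθ₀, hθ₁⟩
    have := pi_pos
    have hsin : sin θ ∈ Set.Ioo 0 1 :=
      ⟨sin_pos_of_pos_of_lt_pi hθ₀ (by linarith), by
        simpa using sin_lt_sin_of_lt_of_le_pi_div_two (by linarith) le_rfl hθ₁⟩
    have hcos : cos θ ∈ Set.Ioo 0 1 :=
      ⟨cos_pos_of_mem_Ioo ⟨by linarith, hθ₁⟩, by
        simpa using cos_lt_cos_of_nonneg_of_le_pi_div_two le_rfl hθ₁.le hθ₀⟩
    have hmem {x : ℝ} (hx : x ∈ Set.Ioo 0 1) : r * x ∈ Set.Ioo 0 r :=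
      ⟨mul_pos hr hx.1, mul_lt_of_lt_one_right hr hx.2⟩
    have hcircle : (r * cos θ) ^ 2 + (r * sin θ) ^ 2 = r ^ 2 := by
      rw [mul_pow, mul_pow, ← mul_add, cos_sq_add_sin_sq, mul_one]
    have := hC _ (hmem hcos) _ (hmem hsin) hcircle
    simp only [hF, sin_pi_div_two_sub, cos_pi_div_two_sub]
    linarith
  have hsum : ∫ θ in 0..π / 2, (F θ + F (π / 2 - θ)) ≤ ∫ _ in 0..π / 2, C :=
    intervalIntegral.integral_mono_on_of_le_Ioo (by positivity) (hFint.add hFint') (by simp) hbound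
  rw [intervalIntegral.integral_add hFint hFint', hreflect, hsubst,
    intervalIntegral.integral_const, smul_eq_mul] at hsum
  linarith

/-- Two points `s, t` on a quarter circle of radius `h`, rounded up to rows, satisfy the constraint
of a width profile, so `L` has average at most `(π / 2) * k / h`. -/
lemma IsWidthProfile.sum_le_pi_div_two_mul {k h : ℕ} {L : ℕ → ℕ} (hL : IsWidthProfile k h L)
    (hh : 0 < h) : ∑ n ∈ Icc 1 h, (L n : ℝ) ≤ π / 2 * k := by
  set ρ : ℝ → ℝ := fun t => (L (⌊t⌋₊ + 1) : ℝ) with hρ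
  have hrow {t : ℝ} (ht : t ∈ Set.Ico (0 : ℝ) h) : ⌊t⌋₊ + 1 ∈ Icc 1 h := by
    have := (Nat.floor_lt ht.1).2 ht.2
    grind
  have hint : IntegrableOn ρ (Set.Ico ((0 : ℕ) : ℝ) h) := by
    refine .of_bound (by simp) ?_ (2 * k) ?_
    · exact ((measurable_from_top (f := fun n : ℕ => (L (n + 1) : ℝ))).comp
        Nat.measurable_floor).aestronglyMeasurable
    · refine ae_restrict_of_forall_mem measurableSet_Ico fun t ht => ?_
      have hmem := hrow (by simpa using ht)
      have := hL _ hmem _ hmem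
      have hbound : L (⌊t⌋₊ + 1) ≤ 2 * k := by nlinarith
      rw [Real.norm_of_nonneg (by positivity)]
      simp only [hρ]
      exact_mod_cast hbound
  have hsum : ∑ n ∈ Icc 1 h, (L n : ℝ) ≤ ∫ t in ((0 : ℕ) : ℝ)..h, ρ t := calc
    _ = ∑ n ∈ Ico 0 h, ρ n := by
      simp only [hρ, Nat.floor_natCast, sum_Ico_add' (fun n => (L n : ℝ)) 0 h 1]
      rfl
    _ ≤ _ := by
      refine sum_Ico_le_integral_of_le h.zero_le (fun n _ t ht => ?_) hint
      have : ⌊t⌋₊ = n :=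
        (Nat.floor_eq_iff (n.cast_nonneg.trans ht.1)).2 ⟨ht.1, by simpa using ht.2⟩
      simp only [hρ, this, Nat.floor_natCast, le_refl]
  refine hsum.trans ?_
  rw [Nat.cast_zero] at hint ⊢
  have hh' : (0 : ℝ) < h := mod_cast hh
  have := integral_le_of_forall_mem_circle (C := 2 * k) hh'
    ((intervalIntegrable_iff_integrableOn_Ico_of_le hh'.le).2 hint) fun s hs t ht _ => calc
      s * ρ t + t * ρ s ≤ (⌊s⌋₊ + 1) * ρ t + (⌊t⌋₊ + 1) * ρ s := by
        gcongr
        · exact (Nat.lt_floor_add_one s).le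
        · exact (Nat.lt_floor_add_one t).le
      _ ≤ 2 * k := by
        simp only [hρ]
        exact_mod_cast hL _ (hrow ⟨ht.1.le, ht.2⟩) _ (hrow ⟨hs.1.le, hs.2⟩)
  linarith

lemma sum_Icc_le_of_periodic {f : ℕ → ℕ} {p β : ℕ} (hf : Function.Periodic f p)
    (hp : ∀ j < p, p * ∑ n ∈ Icc 1 j, f n ≤ (∑ n ∈ Icc 1 p, f n) * j + β) (j : ℕ) :
    p * ∑ n ∈ Icc 1 j, f n ≤ (∑ n ∈ Icc 1 p, f n) * j + β := by
  induction j using Nat.strong_induction_on with | _ j ih => ?_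
  obtain hj | hj := lt_or_ge j p
  · exact hp j hj
  obtain rfl | hp₀ := p.eq_zero_or_pos
  · simp
  obtain ⟨i, rfl⟩ := exists_add_of_le hj
  have hsplit : ∑ n ∈ Icc 1 (p + i), f n = ∑ n ∈ Icc 1 p, f n + ∑ n ∈ Icc 1 i, f n := by
    simp only [← Ico_add_one_right_eq_Icc]
    rw [← sum_Ico_consecutive f (Nat.le_add_left 1 p) (by omega : p + 1 ≤ p + i + 1)]
    congr 1
    rw [show p + 1 = 1 + p by ring, show p + i + 1 = i + 1 + p by ring, ← sum_Ico_add']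
    exact sum_congr rfl fun n _ => hf n
  grw [hsplit, mul_add, ih i (by omega)]
  exact le_of_eq (by ring)

lemma sum_mul_le_of_antitone {f L : ℕ → ℕ} {α β h : ℕ} (hL : Antitone L) (hh : 1 ≤ h)
    (hf : ∀ j, ∑ n ∈ Icc 1 j, f n ≤ α * j + β) :
    ∑ n ∈ Icc 1 h, f n * L n ≤ α * ∑ n ∈ Icc 1 h, L n + β * L 1 := by
  suffices hslack : ∑ n ∈ Icc 1 h, f n * L n + (α * h + β) * L h ≤
      α * ∑ n ∈ Icc 1 h, L n + β * L 1 + (∑ n ∈ Icc 1 h, f n) * L h by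
    have := Nat.mul_le_mul_right (L h) (hf h)
    omega
  induction h, hh using Nat.le_induction with
  | base => simp; linarith
  | succ j _ ih =>
    obtain ⟨e, he⟩ := exists_add_of_le (hf j)
    have hmono : e * L (j + 1) ≤ e * L j := Nat.mul_le_mul_left e (hL j.le_succ)
    simp only [sum_Icc_succ_top (Nat.le_add_left 1 j)]
    rw [he] at ih
    linear_combination ih + hmono + L (j + 1) * he

/-- For tall sets, row `n` is only sieved by those of the primes 2, 3, 5, 7 that divide `n`, which
makes the coefficients periodic in `n`. -/
def sieve (n : ℕ) : ℕ := n.gcd 210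

/-- The coefficient `φ(d) / d` with `d = sieve n`, in units of `1 / 44100`. -/
def sieveWeight (n : ℕ) : ℕ := 210 * (210 / sieve n * (sieve n).totient)

/-- The constant term `discrepancy d / d` with `d = sieve n`, in units of `1 / 210`. -/
def sieveError (n : ℕ) : ℕ := 210 / sieve n * discrepancy (sieve n)

lemma sieve_periodic : Function.Periodic sieve 210 := fun n => by simp [sieve]

lemma sum_sieveWeight_le (j : ℕ) : ∑ n ∈ Icc 1 j, sieveWeight n ≤ 27648 * j + 20436 := by
  have hsum : ∑ n ∈ Icc 1 210, sieveWeight n = 210 * 27648 := by decide +kernel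
  have hper : Function.Periodic sieveWeight 210 :=
    sieve_periodic.comp fun d => 210 * (210 / d * d.totient)
  have := sum_Icc_le_of_periodic (β := 210 * 20436) hper (by rw [hsum]; decide +kernel) j
  rw [hsum] at this
  omega

lemma sum_sieveError_le (j : ℕ) : 210 * ∑ n ∈ Icc 1 j, sieveError n ≤ 59352 * j := by
  have hsum : ∑ n ∈ Icc 1 210, sieveError n = 59352 := by decide +kernel
  have hper : Function.Periodic sieveError 210 :=
    sieve_periodic.comp fun d => 210 / d * discrepancy d
  have := sum_Icc_le_of_periodic (β := 0) hper (by rw [hsum]; decide +kernel) j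
  rwa [hsum] at this

lemma mul_le_sieve {n c ℓ : ℕ}
    (hc : sieve n * c ≤ (sieve n).totient * ℓ + discrepancy (sieve n)) :
    44100 * c ≤ sieveWeight n * ℓ + 210 * sieveError n := by
  obtain ⟨q, hq⟩ : sieve n ∣ 210 := Nat.gcd_dvd_right n 210
  have hpos : 0 < sieve n := Nat.gcd_pos_of_pos_right n (by norm_num)
  have hdiv : 210 / sieve n = q := by rw [hq, Nat.mul_div_cancel_left q hpos]
  rw [sieveWeight, sieveError, hdiv]
  calc 44100 * c = 210 * (q * (sieve n * c)) := by linear_combination 210 * c * hq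
    _ ≤ 210 * (q * ((sieve n).totient * ℓ + discrepancy (sieve n))) := by gcongr
    _ = _ := by ring

lemma IsWidthProfile.sum_le_of_lt_height {k h : ℕ} {L : ℕ → ℕ} (hL : IsWidthProfile k h L)
    (hanti : Antitone L) (hh : 200 < h) (hkh : 2 * h ^ 2 ≤ 3 * k + 6 * h) {c : ℕ → ℕ}
    (hc : ∀ n ∈ Icc 1 h, sieve n * c n ≤ (sieve n).totient * L n + discrepancy (sieve n)) :
    ∑ n ∈ Icc 1 h, c n ≤ k + 1 := by
  have hC : 44100 * ∑ n ∈ Icc 1 h, c n ≤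
      27648 * ∑ n ∈ Icc 1 h, L n + 20436 * L 1 + 59352 * h := calc
    _ ≤ ∑ n ∈ Icc 1 h, (sieveWeight n * L n + 210 * sieveError n) := by
      rw [mul_sum]
      exact sum_le_sum fun n hn => mul_le_sieve (hc n hn)
    _ ≤ _ := by
      rw [sum_add_distrib, ← mul_sum]
      exact add_le_add (sum_mul_le_of_antitone hanti (by omega) sum_sieveWeight_le)
        (sum_sieveError_le h)
  have hsum : 10000 * ∑ n ∈ Icc 1 h, L n ≤ 15708 * k := by
    have hpi := hL.sum_le_pi_div_two_mul (by omega)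
    have hk : π * k ≤ 3.1416 * k := by gcongr; exact pi_lt_d4.le
    rify
    linarith
  have hL₁ : 201 * L 1 ≤ 2 * k := by
    have := hL 1 (by grind) h (by grind)
    have : 201 * L 1 ≤ h * L 1 := Nat.mul_le_mul_right _ hh
    omega
  have hhk : 396 * h ≤ 3 * k := by nlinarith
  omega

/-! ### Unimodular normalization -/

section Determinants

/-- The determinant of the pair of columns `p`, `q`, bounded by `k` on a `k`-nice set. -/
def cross (p q : ℤ × ℤ) : ℤ := p.1 * q.2 - q.1 * p.2

variable {k : ℕ} {u p q : ℤ × ℤ} {T : Finset (ℤ × ℤ)}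

lemma gcd_eq_one_iff_exists_cross_eq_one : Int.gcd p.1 p.2 = 1 ↔ ∃ q, cross p q = 1 := by
  rw [← Int.isCoprime_iff_gcd_eq_one]
  constructor
  · rintro ⟨a, b, hab⟩
    exact ⟨(-b, a), by simp only [cross]; linarith⟩
  · rintro ⟨q, hq⟩
    exact ⟨q.2, -q.1, by simp only [cross] at hq; linarith⟩

lemma gcd_eq_one_of_abs_cross_eq_one (h : |cross p q| = 1) : Int.gcd p.1 p.2 = 1 := by
  rw [gcd_eq_one_iff_exists_cross_eq_one]
  obtain h | h := eq_or_eq_neg_of_abs_eq h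
  · exact ⟨q, h⟩
  · exact ⟨-q, by simp only [cross, Prod.fst_neg, Prod.snd_neg] at h ⊢; linarith⟩

lemma eq_or_eq_neg_of_cross_eq_zero (hp : Int.gcd p.1 p.2 = 1) (hq : Int.gcd q.1 q.2 = 1)
    (h : cross p q = 0) : p = q ∨ p = -q := by
  obtain ⟨r, hr⟩ := gcd_eq_one_iff_exists_cross_eq_one.1 hq
  have hsmul : p = cross p r • q := by
    ext <;> simp only [cross, Prod.smul_fst, Prod.smul_snd, smul_eq_mul] at h hr ⊢
    · linear_combination -r.1 * h - p.1 * hr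
    · linear_combination -r.2 * h - p.2 * hr
  have hunit : (cross p r).natAbs = 1 := by
    rw [hsmul] at hp
    simpa [Int.gcd_mul_left, hq] using hp
  obtain h | h := Int.natAbs_eq_iff.1 hunit <;> rw [h] at hsmul <;> simp [hsmul]

lemma IsKNice.mono {Q R : Set (ℤ × ℤ)} (hR : IsKNice k R) (hQR : Q ⊆ R) : IsKNice k Q :=
  ⟨fun p hp => hR.1 p (hQR hp), fun p hp hn => hR.2.1 p (hQR hp) (hQR hn),
    fun p hp q hq => hR.2.2 p (hQR hp) q (hQR hq)⟩

lemma IsKNice.eq_of_cross_eq_zero {Q : Set (ℤ × ℤ)} (hQ : IsKNice k Q) (hp : p ∈ Q) (hq : q ∈ Q)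
    (h : cross p q = 0) : p = q :=
  (eq_or_eq_neg_of_cross_eq_zero (hQ.1 p hp).2 (hQ.1 q hq).2 h).resolve_right fun hpq =>
    hQ.2.1 q hq (hpq ▸ hp)

lemma IsKNice.image_of_abs_cross_eq (hT : IsKNice k T) {f : ℤ × ℤ → ℤ × ℤ}
    (hf : ∀ p q, |cross (f p) (f q)| = |cross p q|) :
    IsKNice k (T.image f) ∧ #(T.image f) = #T := by
  have hzero {p q} (h : cross (f p) (f q) = 0) : cross p q = 0 := by
    rw [← abs_eq_zero, ← hf, h, abs_zero]
  have hgcd (p) (hp : p ∈ T) : Int.gcd (f p).1 (f p).2 = 1 := by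
    obtain ⟨q, hq⟩ := gcd_eq_one_iff_exists_cross_eq_one.1 (hT.1 p hp).2
    exact gcd_eq_one_of_abs_cross_eq_one (q := f q) (by rw [hf, hq, abs_one])
  have hne (p) (hp : p ∈ T) : f p ≠ (0, 0) := fun h => by simpa [h] using hgcd p hp
  refine ⟨⟨?_, ?_, ?_⟩, card_image_of_injOn fun p hp q hq hpq => ?_⟩
  · simpa only [coe_image, Set.forall_mem_image] using fun p hp => ⟨hne p hp, hgcd p hp⟩
  · simp only [coe_image, Set.forall_mem_image]
    rintro p hp ⟨q, hq, hqp⟩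
    obtain rfl := hT.eq_of_cross_eq_zero hp hq (hzero (by
      simp only [cross, hqp, Prod.fst_neg, Prod.snd_neg]
      ring))
    exact hne p hp (self_eq_neg.1 hqp)
  · simp only [coe_image, Set.forall_mem_image]
    exact fun p hp q hq => (hf p q).trans_le (hT.2.2 p hp q hq)
  · exact hT.eq_of_cross_eq_zero hp hq (hzero (by rw [hpq, cross, sub_self]))

/-- A unimodular change of coordinates sends the direction `u` to the first axis, after which each
point below the axis is replaced by its negative. -/
lemma exists_map_snd_eq_abs_cross (hu : Int.gcd u.1 u.2 = 1) :
    ∃ f : ℤ × ℤ → ℤ × ℤ, (∀ p q, |cross (f p) (f q)| = |cross p q|) ∧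
      ∀ p, (f p).2 = |cross u p| := by
  obtain ⟨v, hv⟩ := gcd_eq_one_iff_exists_cross_eq_one.1 hu
  set ε : ℤ × ℤ → ℤ := fun p => if 0 ≤ cross u p then 1 else -1 with hε
  have habs (p) : |ε p| = 1 := by simp only [hε]; split_ifs <;> simp
  refine ⟨fun p => (ε p * cross p v, ε p * cross u p), fun p q => ?_, fun p => ?_⟩
  · have : cross (ε p * cross p v, ε p * cross u p) (ε q * cross q v, ε q * cross u q) =
        ε p * ε q * (cross u v * cross p q) := by
      simp only [cross]
      ring
    rw [this, hv, one_mul, abs_mul, abs_mul, habs, habs, one_mul, one_mul]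
  · simp only [hε]
    split_ifs with h
    · rw [one_mul, abs_of_nonneg h]
    · rw [neg_one_mul, abs_of_neg (not_le.1 h)]

lemma IsKNice.exists_yNonneg (hT : IsKNice k T) (hu : Int.gcd u.1 u.2 = 1) :
    ∃ T' : Finset (ℤ × ℤ), IsKNice k T' ∧ #T' = #T ∧ YNonneg T' ∧
      ∀ q ∈ T', ∃ p ∈ T, q.2 = |cross u p| := by
  obtain ⟨f, hf, hsnd⟩ := exists_map_snd_eq_abs_cross hu
  obtain ⟨hnice, hcard⟩ := hT.image_of_abs_cross_eq hf
  refine ⟨T.image f, hnice, hcard, ?_, ?_⟩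
  · simp only [YNonneg, coe_image, Set.forall_mem_image, hsnd]
    exact fun p _ => abs_nonneg _
  · simpa only [forall_mem_image, hsnd] using fun p hp => ⟨p, hp, rfl⟩

end Determinants

/-! ### Nice sets of small height by pigeonhole -/

section Pigeonhole

variable {k : ℕ} {T : Finset (ℤ × ℤ)}

lemma card_filter_not_even_and_even (M : ℕ) :
    #{c ∈ range (2 * M) ×ˢ range (2 * M) | ¬(Even c.1 ∧ Even c.2)} = 3 * M ^ 2 := by
  have heven : #{a ∈ range (2 * M) | Even a} = M := by
    have : {a ∈ range (2 * M) | Even a} = (range M).image (2 * ·) := by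
      ext a
      simp only [mem_filter, mem_range, mem_image, even_iff_exists_two_mul]
      exact ⟨fun ⟨_, b, hb⟩ => ⟨b, by omega, hb.symm⟩, fun ⟨b, _, hba⟩ => ⟨by omega, b, hba.symm⟩⟩
    rw [this, card_image_of_injective _ (mul_right_injective₀ two_ne_zero), card_range]
  have := card_filter_add_card_filter_not (s := range (2 * M) ×ˢ range (2 * M))
    (fun c => Even c.1 ∧ Even c.2)
  rw [filter_product, card_product, card_product, heven, card_range] at this
  linarith

lemma exists_sub_eq_two_mul_smul {S : Finset (ℤ × ℤ)} {M : ℕ}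
    (hS : ∀ p ∈ S, ¬(Even p.1 ∧ Even p.2)) (hM : 0 < M) (hcard : 3 * M ^ 2 < #S) :
    ∃ p ∈ S, ∃ q ∈ S, ∃ u : ℤ × ℤ, u ≠ 0 ∧ p - q = (2 * M : ℤ) • u := by
  have hpos : (0 : ℤ) < 2 * M := by positivity
  set residue : ℤ × ℤ → ℕ × ℕ := fun p => ((p.1 % (2 * M)).toNat, (p.2 % (2 * M)).toNat)
  obtain ⟨p, hp, q, hq, hne, hpq⟩ := exists_ne_map_eq_of_card_lt_of_maps_to (f := residue)
    (t := {c ∈ range (2 * M) ×ˢ range (2 * M) | ¬(Even c.1 ∧ Even c.2)})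
    (by rwa [card_filter_not_even_and_even]) fun p hp => by
      have h₁ := Int.emod_lt_of_pos p.1 hpos
      have h₂ := Int.emod_lt_of_pos p.2 hpos
      have hodd := hS p hp
      simp only [residue, coe_filter, mem_product, mem_range, Set.mem_ofPred_eq]
      refine ⟨by omega, fun h => hodd ?_⟩
      simp only [← Int.even_coe_nat, Int.toNat_of_nonneg (Int.emod_nonneg _ hpos.ne')] at h
      simpa only [Int.even_iff, Int.emod_emod_of_dvd _ (dvd_mul_right 2 (M : ℤ))] using h
  simp only [residue, Prod.mk.injEq] at hpq
  have hmod {a b : ℤ} (h : (a % (2 * M)).toNat = (b % (2 * M)).toNat) : 2 * (M : ℤ) ∣ a - b := by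
    have := Int.emod_nonneg a hpos.ne'
    have := Int.emod_nonneg b hpos.ne'
    exact (Int.ModEq.symm (show a % _ = b % _ by omega)).dvd
  obtain ⟨x, hx⟩ := hmod hpq.1
  obtain ⟨y, hy⟩ := hmod hpq.2
  have hsub : p - q = (2 * M : ℤ) • (x, y) := Prod.ext hx hy
  refine ⟨p, hp, q, hq, (x, y), fun h₀ => hne ?_, hsub⟩
  rwa [h₀, smul_zero, sub_eq_zero] at hsub

lemma exists_gcd_eq_one_smul {u : ℤ × ℤ} (hu : u ≠ 0) :
    ∃ g : ℕ, 0 < g ∧ ∃ v : ℤ × ℤ, Int.gcd v.1 v.2 = 1 ∧ u = (g : ℤ) • v := by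
  have hg : 0 < Int.gcd u.1 u.2 := Int.gcd_pos_iff.2 (by
    contrapose! hu
    exact Prod.ext hu.1 hu.2)
  obtain ⟨g, x, y, hg, hxy, hx, hy⟩ := Int.exists_gcd_one' hg
  exact ⟨g, hg, (x, y), hxy, Prod.ext (hx.trans (mul_comm _ _)) (hy.trans (mul_comm _ _))⟩

/-- Two points of `T ∪ -T` agree modulo `2 * M`, because coprime pairs occupy only `3 * M ^ 2` of
the residue classes. -/
lemma IsKNice.exists_mul_abs_cross_le (hT : IsKNice k T) {M : ℕ} (hM : 0 < M)
    (hcard : 3 * M ^ 2 < 2 * #T) :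
    ∃ u : ℤ × ℤ, Int.gcd u.1 u.2 = 1 ∧ ∀ x ∈ T, M * |cross u x| ≤ k := by
  set S := T ∪ T.image (-·)
  have hS {P : ℤ × ℤ → Prop} (hP : ∀ p ∈ T, P p) (hneg : ∀ p ∈ T, P (-p)) : ∀ p ∈ S, P p := by
    simp only [S, mem_union, mem_image]
    rintro p (hp | ⟨p, hp, rfl⟩)
    exacts [hP p hp, hneg p hp]
  have hScard : #S = 2 * #T := by
    rw [card_union_of_disjoint, card_image_of_injective _ neg_injective, two_mul]
    simp only [disjoint_right, forall_mem_image]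
    exact fun p hp => hT.2.1 p hp
  have hodd : ∀ p ∈ S, ¬(Even p.1 ∧ Even p.2) := by
    have (p) (hp : p ∈ T) : ¬(Even p.1 ∧ Even p.2) := fun h => by
      have := Int.dvd_gcd h.1.two_dvd h.2.two_dvd
      simp [(hT.1 p hp).2] at this
    exact hS this (by simpa using this)
  have hcross (x) (hx : x ∈ T) : ∀ p ∈ S, |cross p x| ≤ k := by
    refine hS (fun p hp => hT.2.2 p hp x hx) fun p hp => ?_
    have hneg : cross (-p) x = -cross p x := by
      simp only [cross, Prod.fst_neg, Prod.snd_neg]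
      ring
    rw [hneg, abs_neg]
    exact hT.2.2 p hp x hx
  obtain ⟨p, hp, q, hq, u, hu, hpq⟩ := exists_sub_eq_two_mul_smul hodd hM (hScard ▸ hcard)
  obtain ⟨g, hg, v, hv, rfl⟩ := exists_gcd_eq_one_smul hu
  refine ⟨v, hv, fun x hx => ?_⟩
  have hdiff : 2 * (M * (g * cross v x)) = cross p x - cross q x := by
    have h₁ := congrArg Prod.fst hpq
    have h₂ := congrArg Prod.snd hpq
    simp only [Prod.fst_sub, Prod.snd_sub, Prod.smul_fst, Prod.smul_snd, smul_eq_mul] at h₁ h₂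
    simp only [cross]
    linear_combination x.1 * h₂ - x.2 * h₁
  calc (M : ℤ) * |cross v x| ≤ M * (g * |cross v x|) := by
        gcongr
        exact le_mul_of_one_le_left (abs_nonneg _) (mod_cast hg)
    _ = |M * (g * cross v x)| := by simp only [abs_mul, Nat.abs_cast]
    _ ≤ k := by
      have h₁ := abs_le.1 (hcross x hx p hp)
      have h₂ := abs_le.1 (hcross x hx q hq)
      exact abs_le.2 ⟨by linarith, by linarith⟩

lemma exists_heightEq_of_nonempty (hT : T.Nonempty) : ∃ h, HeightEq T h := by
  obtain ⟨p, hp, hmax⟩ := T.exists_max_image (fun p => p.2.natAbs) hT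
  refine ⟨p.2.natAbs, fun q hq => ?_, p, hp, Int.abs_eq_natAbs _⟩
  rw [Int.abs_eq_natAbs]
  exact_mod_cast hmax q hq

lemma IsKNice.exists_heightEq_mul_le (hT : IsKNice k T) {M : ℕ} (hM : 0 < M)
    (hcard : 3 * M ^ 2 < 2 * #T) :
    ∃ T' : Finset (ℤ × ℤ), ∃ h : ℕ, IsKNice k T' ∧ #T' = #T ∧ YNonneg T' ∧ HeightEq T' h ∧
      M * h ≤ k := by
  obtain ⟨u, hu, huT⟩ := hT.exists_mul_abs_cross_le hM hcard
  obtain ⟨T', hT', hcard', hY, hsnd⟩ := hT.exists_yNonneg hu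
  have hpos : 0 < #T' := by omega
  obtain ⟨h, hle, q, hq, hqh⟩ := exists_heightEq_of_nonempty (card_pos.1 hpos)
  refine ⟨T', h, hT', hcard', hY, ⟨hle, q, hq, hqh⟩, ?_⟩
  obtain ⟨p, hp, hqp⟩ := hsnd q hq
  have := huT p hp
  rw [← abs_abs, ← hqp, hqh] at this
  exact_mod_cast this

end Pigeonhole

/-! ### Counting a nice set by rows -/

section Rows

variable {k h n : ℕ} {T : Finset (ℤ × ℤ)} {x y : ℤ}

/-- The first coordinates of the points of `T` at height `n`. -/
def row (T : Finset (ℤ × ℤ)) (n : ℕ) : Finset ℤ := {p ∈ T | p.2 = (n : ℤ)}.image Prod.fst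

/-- The largest distance between two points of `T` in a common row at height at least `n`.
Including the rows above `n` makes the width antitone in `n`. -/
def width (T : Finset (ℤ × ℤ)) (n : ℕ) : ℕ :=
  {c ∈ T ×ˢ T | c.1.2 = c.2.2 ∧ (n : ℤ) ≤ c.1.2}.sup fun c => (c.1.1 - c.2.1).toNat

lemma mem_row : x ∈ row T n ↔ (x, (n : ℤ)) ∈ T := by
  simp [row]

lemma width_antitone (T : Finset (ℤ × ℤ)) : Antitone (width T) := fun _ _ hmn =>
  sup_mono (monotone_filter_right _ fun _ _ hc => ⟨hc.1, (Nat.cast_le.2 hmn).trans hc.2⟩)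

lemma sub_le_width (hx : x ∈ row T n) (hy : y ∈ row T n) : x - y ≤ width T n := by
  rw [mem_row] at hx hy
  refine Int.toNat_le.1 (le_sup (f := fun c : (ℤ × ℤ) × (ℤ × ℤ) => (c.1.1 - c.2.1).toNat)
    (b := ((x, n), (y, n))) ?_)
  simp [hx, hy]

lemma exists_sub_eq_width {p : ℤ × ℤ} (hp : p ∈ T) (hn : n ≤ p.2) :
    ∃ x y m : ℤ, (x, m) ∈ T ∧ (y, m) ∈ T ∧ n ≤ m ∧ width T n = x - y := by
  obtain ⟨⟨⟨x, m⟩, y, m'⟩, hmem, hsup⟩ := exists_mem_eq_sup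
    {c ∈ T ×ˢ T | c.1.2 = c.2.2 ∧ (n : ℤ) ≤ c.1.2} ⟨(p, p), by simp [hp, hn]⟩
    fun c => (c.1.1 - c.2.1).toNat
  simp only [mem_filter, mem_product] at hmem
  obtain ⟨⟨hx, hy⟩, rfl, hnm⟩ := hmem
  change width T n = (x - y).toNat at hsup
  obtain hxy | hxy := le_total y x
  · exact ⟨x, y, m, hx, hy, hnm, by omega⟩
  · exact ⟨x, x, m, hx, hx, hnm, by omega⟩

/-- Points `(x, m)`, `(y, m)` and `(z, l)`, `(w, l)` satisfy
`l * (x - y) + m * (z - w) = cross (x, m) (w, l) + cross (z, l) (y, m)`. -/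
lemma IsKNice.isWidthProfile (hT : IsKNice k T) {p : ℤ × ℤ} (hp : p ∈ T) (hh : h ≤ p.2) :
    IsWidthProfile k h (width T) := by
  intro a ha b hb
  rw [mem_Icc] at ha hb
  obtain ⟨x, y, m, hx, hy, ham, hxy⟩ := exists_sub_eq_width (n := a) hp (by omega)
  obtain ⟨z, w, l, hz, hw, hbl, hzw⟩ := exists_sub_eq_width (n := b) hp (by omega)
  have h₁ := (le_abs_self _).trans (hT.2.2 _ hx _ hw)
  have h₂ := (le_abs_self _).trans (hT.2.2 _ hz _ hy)
  zify
  calc (b : ℤ) * width T a + a * width T b ≤ l * width T a + m * width T b := by gcongr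
    _ ≤ 2 * k := by
      rw [hxy, hzw]
      linarith

lemma IsKNice.mul_card_row_le (hT : IsKNice k T) {d : ℕ} (hd : 0 < d) (hdn : d ∣ n) :
    d * #(row T n) ≤ d.totient * width T n + discrepancy d := by
  refine mul_card_le_of_coprime hd (fun x hx => ?_) fun x hx y hy => sub_le_width hx hy
  have hxn : Int.gcd x n = 1 := (hT.1 _ (mem_row.1 hx)).2
  exact Nat.Coprime.coprime_dvd_right hdn hxn

lemma IsKNice.card_row_zero_le (hT : IsKNice k T) : #(row T 0) ≤ 1 :=
  card_le_one.2 fun x hx y hy => by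
    have := hT.eq_of_cross_eq_zero (mem_row.1 hx) (mem_row.1 hy) (by simp [cross])
    exact congrArg Prod.fst this

lemma IsKNice.card_row_le (hT : IsKNice k T) (hn : 1 ≤ n) : #(row T n) ≤ k + 1 := by
  obtain hrow | ⟨x, hx⟩ := (row T n).eq_empty_or_nonempty
  · simp [hrow]
  have hwidth := hT.isWidthProfile (h := n) (mem_row.1 hx) le_rfl n (by simpa) n (by simpa)
  have hcard := hT.mul_card_row_le one_pos (one_dvd n)
  have hdisc : discrepancy 1 = 1 := by decide
  rw [hdisc, Nat.totient_one] at hcard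
  nlinarith

lemma IsKNice.card_le_sum_row (hT : IsKNice k T) (hY : YNonneg T) (hh : HeightLe T h) :
    #T ≤ 1 + ∑ n ∈ Icc 1 h, #(row T n) := by
  have hrow (n : ℕ) : #{p ∈ T | p.2.toNat = n} ≤ #(row T n) := by
    refine card_le_card_of_injOn Prod.fst (fun p hp => ?_) fun p hp q hq hpq => Prod.ext hpq ?_
    · rw [mem_coe, mem_filter] at hp
      have := hY p hp.1
      rw [mem_coe, mem_row, show (n : ℤ) = p.2 by omega]
      exact hp.1
    · rw [mem_coe, mem_filter] at hp hq
      have := hY p hp.1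
      have := hY q hq.1
      omega
  calc #T = ∑ n ∈ Icc 0 h, #{p ∈ T | p.2.toNat = n} :=
        card_eq_sum_card_fiberwise fun p hp => by
          have := (le_abs_self _).trans (hh p hp)
          simp only [coe_Icc, Set.mem_Icc]
          omega
    _ ≤ ∑ n ∈ Icc 0 h, #(row T n) := sum_le_sum fun n _ => hrow n
    _ = #(row T 0) + ∑ n ∈ Icc 1 h, #(row T n) := by
      rw [← add_sum_Ioc_eq_sum_Icc h.zero_le, ← Icc_add_one_left_eq_Ioc, zero_add]
    _ ≤ _ := by
      gcongr
      exact hT.card_row_zero_le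

lemma IsKNice.card_le_of_heightLe (hT : IsKNice k T) (hY : YNonneg T) (hh : HeightLe T h) :
    #T ≤ 1 + h * (k + 1) := by
  grw [hT.card_le_sum_row hY hh, sum_le_card_nsmul _ _ (k + 1) fun n hn =>
    hT.card_row_le (mem_Icc.1 hn).1]
  simp

lemma IsKNice.card_le_of_four_le_height (hT : IsKNice k T) (hY : YNonneg T) (hTh : HeightEq T h)
    (hk : 3225 ≤ k) (hh : 4 ≤ h) (hkh : 2 * h ^ 2 ≤ 3 * k + 6 * h) : #T ≤ k + 2 := by
  obtain ⟨hle, p, hp, hph⟩ := hTh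
  have hL := hT.isWidthProfile hp (by rw [← abs_of_nonneg (hY p hp), hph])
  have hsum : ∑ n ∈ Icc 1 h, #(row T n) ≤ k + 1 := by
    obtain h200 | h200 := le_or_gt h 200
    · exact hL.sum_le_of_height_le hk (mem_Icc.2 ⟨hh, h200⟩) hkh fun n hn =>
        hT.mul_card_row_le (mem_Icc.1 hn).1 dvd_rfl
    · exact hL.sum_le_of_lt_height (width_antitone T) h200 hkh fun n _ =>
        hT.mul_card_row_le (Nat.gcd_pos_of_pos_right n (by norm_num)) (Nat.gcd_dvd_left n 210)
  have := hT.card_le_sum_row hY hle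
  omega

end Rows

/-! ### Extremal nice sets -/

section Extremal

variable {k : ℕ} {T : Finset (ℤ × ℤ)}

lemma exists_isKNice_card_eq (hk : 0 < k) :
    ∃ T : Finset (ℤ × ℤ), IsKNice k T ∧ HeightLe T 1 ∧ #T = k + 2 := by
  refine ⟨insert (1, 0) ((range (k + 1)).image fun m : ℕ => ((m : ℤ), 1)), ⟨?_, ?_, ?_⟩, ?_, ?_⟩
  · simp
  · simp
  · simp only [coe_insert, coe_image, coe_range, Set.forall_mem_insert, Set.forall_mem_image,
      Set.mem_Iio, abs_le]
    grind
  · simp [HeightLe]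
  · have hinj : Function.Injective fun m : ℕ => ((m : ℤ), (1 : ℤ)) := fun a b hab => by
      simpa using hab
    rw [card_insert_of_notMem (by simp), card_image_of_injective _ hinj, card_range]

/-- If `#T ≥ k + 3`, the pigeonhole argument applies with `M` about `√(2k/3)`, which bounds the
height by about `√(3k/2)`. -/
lemma IsKNice.exists_height_le_three (hT : IsKNice k T) (hk : 3225 ≤ k) :
    ∃ T' : Finset (ℤ × ℤ), IsKNice k T' ∧ HeightLe T' 3 ∧ #T ≤ #T' := by
  obtain hsmall | hlarge := le_or_gt #T (k + 2)
  · obtain ⟨E, hE, hE₁, hcard⟩ := exists_isKNice_card_eq (k := k) (by omega)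
    exact ⟨E, hE, fun p hp => (hE₁ p hp).trans (by norm_num), by omega⟩
  set M := Nat.sqrt ((2 * k + 5) / 3)
  have hM : M ^ 2 ≤ (2 * k + 5) / 3 := Nat.sqrt_le' _
  have hM' : (2 * k + 5) / 3 < (M + 1) ^ 2 := Nat.lt_succ_sqrt' _
  obtain ⟨T', h, hT', hcard, hY, hTh, hMh⟩ :=
    hT.exists_heightEq_mul_le (M := M) (Nat.sqrt_pos.2 (by omega)) (by omega)
  refine ⟨T', hT', ?_, hcard.ge⟩
  obtain hh | hh := Nat.lt_or_ge 3 h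
  · have hkh : 2 * h ^ 2 ≤ 3 * k + 6 * h := by
      have : (2 * k + 6) * h ^ 2 ≤ 3 * (k + h) ^ 2 := calc
        _ ≤ 3 * (M + 1) ^ 2 * h ^ 2 := by gcongr; omega
        _ = 3 * (M * h + h) ^ 2 := by ring
        _ ≤ _ := by gcongr
      refine Nat.le_of_mul_le_mul_left ?_ (show 0 < k by omega)
      nlinarith [sq_nonneg h]
    have := hT'.card_le_of_four_le_height hY hTh hk hh hkh
    omega
  · exact fun p hp => (hTh.1 p hp).trans (mod_cast hh)

lemma IsKNice.card_le_of_heightLe_three (hT : IsKNice k T) (hh : HeightLe T 3) :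
    #T ≤ 3 * k + 4 := by
  obtain ⟨T', hT', hcard, hY, hsnd⟩ := hT.exists_yNonneg (u := (1, 0)) rfl
  have := hT'.card_le_of_heightLe hY (h := 3) fun q hq => by
    obtain ⟨p, hp, hqp⟩ := hsnd q hq
    simpa [hqp, cross] using hh p hp
  omega

lemma IsKNice.finite_and_ncard_le {Q : Set (ℤ × ℤ)} (hQ : IsKNice k Q) {N : ℕ}
    (hN : ∀ T : Finset (ℤ × ℤ), IsKNice k T → #T ≤ N) : Q.Finite ∧ Q.ncard ≤ N := by
  have hfin : Q.Finite := by
    by_contra hinf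
    obtain ⟨T, hTQ, hT⟩ := Set.Infinite.exists_subset_card_eq hinf (N + 1)
    have := hN T (hQ.mono hTQ)
    omega
  refine ⟨hfin, ?_⟩
  lift Q to Finset (ℤ × ℤ) using hfin
  rw [Set.ncard_coe_finset]
  exact hN Q hQ

end Extremal

theorem exists_max_kNice_height_le_three (k : ℕ) (hk : 3225 ≤ k) :
    ∃ Q : Set (ℤ × ℤ), IsKNice k Q ∧ HeightLe Q 3 ∧
      ∀ Q' : Set (ℤ × ℤ), IsKNice k Q' → Q'.Finite ∧ Q'.ncard ≤ Q.ncard := by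
  set sizes : Set ℕ := {n | ∃ T : Finset (ℤ × ℤ), IsKNice k T ∧ HeightLe T 3 ∧ #T = n}
  have hbdd : BddAbove sizes := by
    refine ⟨3 * k + 4, ?_⟩
    rintro _ ⟨T, hT, hh, rfl⟩
    exact hT.card_le_of_heightLe_three hh
  have hne : sizes.Nonempty := by
    refine ⟨0, ∅, ?_, ?_, rfl⟩ <;> simp [IsKNice, HeightLe]
  obtain ⟨T, hT, hh, hcard⟩ := Nat.sSup_mem hne hbdd
  refine ⟨T, hT, hh, fun Q' hQ' => ?_⟩
  rw [Set.ncard_coe_finset]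
  refine hQ'.finite_and_ncard_le fun S hS => ?_
  obtain ⟨S', hS', hh', hle⟩ := hS.exists_height_le_three hk
  exact hle.trans (hcard ▸ le_csSup hbdd ⟨S', hS', hh', rfl⟩)
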